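/- Every quadrangle of PHG(2, ℤ/4ℤ) is contained in exactly one hyperoval; that is, for every set of four points lying in four pairwise distinct neighbour classes no three of which are collinear in the quotient plane PG(2,𝔽₂), there is a unique hyperoval of PHG(2, ℤ/4ℤ) containing these four points. -/

import Mathlib

/-!
Four points in general position over a commutative ring can be moved to the standard frame
`⟨e₀⟩, ⟨e₁⟩, ⟨e₂⟩, ⟨(1, 1, 1)⟩` by a linear automorphism. If an arc contains this frame, its other
points avoid the six lines joining two frame points; these are the lines on which a coordinate
vanishes or two coordinates agree. Over `ℤ/4ℤ` the coordinates of such a point are therefore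
`1, 2, 3` in some order, so up to sign it is one of the three cyclic shifts of `(1, 2, 3)`.
A hyperoval through the frame thus has at most these `4 + 3 = 7` points, and determinants show that
they do form a hyperoval.
-/

/-- A point of a projective Hjelmslev geometry PHG(n-1, R): a free rank-1 submodule
of Rⁿ, i.e. the R-span of a vector having at least one unit coordinate. -/
def IsPoint {R : Type} [CommRing R] {n : ℕ} (P : Submodule R (Fin n → R)) : Prop :=
  ∃ v : Fin n → R, (∃ i, IsUnit (v i)) ∧ P = Submodule.span R {v}

/-- A free rank-k submodule of Rⁿ: a submodule linearly isomorphic to Rᵏ. -/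
def IsFreeRank {R : Type} [CommRing R] {n : ℕ} (k : ℕ) (L : Submodule R (Fin n → R)) : Prop :=
  Nonempty ((Fin k → R) ≃ₗ[R] L)

/-- A line of PHG(2, R): a free rank-2 submodule of R³. -/
abbrev IsLine {R : Type} [CommRing R] (L : Submodule R (Fin 3 → R)) : Prop := IsFreeRank 2 L

/-- A hyperoval of PHG(2, R), |R| = 4: a set of 7 points with at most 2 points on each line. -/
def IsHyperoval {R : Type} [CommRing R] (H : Set (Submodule R (Fin 3 → R))) : Prop :=
  (∀ P ∈ H, IsPoint P) ∧ H.ncard = 7 ∧ ∀ L, IsLine L → {P ∈ H | P ≤ L}.ncard ≤ 2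

abbrev R4 := ZMod 4

/-- Reduction mod 2 on ℤ/4ℤ. -/
def red2 : ZMod 4 →+* ZMod 2 := ZMod.castHom (show (2:ℕ) ∣ 4 by norm_num) (ZMod 2)

instance : RingHomSurjective red2 :=
  ⟨fun y => by
    fin_cases y
    · exact ⟨0, map_zero _⟩
    · exact ⟨1, map_one _⟩⟩

/-- Coordinatewise reduction mod 2, as a semilinear map (Fin 3 → ℤ/4ℤ) → (Fin 3 → 𝔽₂). -/
def redMap : (Fin 3 → ZMod 4) →ₛₗ[red2] (Fin 3 → ZMod 2) where
  toFun v := fun i => red2 (v i)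
  map_add' := by intros; funext i; simp
  map_smul' := by intros; funext i; simp [Pi.smul_apply, smul_eq_mul]

/-- The neighbour class of a point, viewed as a point of the quotient plane PG(2,𝔽₂):
the 𝔽₂-line of 𝔽₂³ spanned by the coordinatewise reduction mod 2. -/
def redPt (P : Submodule R4 (Fin 3 → R4)) : Submodule (ZMod 2) (Fin 3 → ZMod 2) :=
  Submodule.map redMap P

/-- Three points of PG(2,𝔽₂) (given as subspaces of 𝔽₂³) are collinear iff together
they span a subspace of dimension at most 2. -/
def CollinearF2 (A B C : Submodule (ZMod 2) (Fin 3 → ZMod 2)) : Prop :=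
  Module.finrank (ZMod 2) ↥(A ⊔ B ⊔ C) ≤ 2

/-- A quadrangle of PHG(2, ℤ/4ℤ): a set of four points lying in four pairwise distinct
neighbour classes, no three of which are collinear in the quotient plane PG(2,𝔽₂). -/
def IsQuadrangleSet (S : Set (Submodule R4 (Fin 3 → R4))) : Prop :=
  (∀ P ∈ S, IsPoint P) ∧ S.ncard = 4 ∧
  (∀ P ∈ S, ∀ Q ∈ S, P ≠ Q → redPt P ≠ redPt Q) ∧
  ∀ P ∈ S, ∀ Q ∈ S, ∀ T ∈ S, P ≠ Q → P ≠ T → Q ≠ T →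
    ¬ CollinearF2 (redPt P) (redPt Q) (redPt T)

section FreeSubmodules

variable {R : Type} [CommRing R] {n k : ℕ}

theorem isFreeRank_span_range {v : Fin k → Fin n → R} (hv : LinearIndependent R v) :
    IsFreeRank k (Submodule.span R (Set.range v)) :=
  ⟨(Module.Basis.span hv).equivFun.symm⟩

theorem IsFreeRank.det_eq_zero {L : Submodule R (Fin n → R)} (hL : IsFreeRank k L) (hkn : k < n)
    {v : Fin n → Fin n → R} (hv : ∀ i, v i ∈ L) : (Matrix.of v).det = 0 := by
  obtain ⟨f⟩ := hL
  -- An alternating form in more variables than the rank of its free domain vanishes.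
  have det_restrict : (Matrix.detRowAlternating (R := R)).compLinearMap L.subtype = 0 :=
    (Module.Basis.ofEquivFun f.symm).ext_alternating fun s hs ↦
      absurd (Fintype.card_le_of_injective s hs) (by simpa using hkn)
  exact DFunLike.congr_fun det_restrict fun i ↦ ⟨v i, hv i⟩

end FreeSubmodules

section LinearIndependence

variable {R ι : Type*} [Ring R] [DecidableEq ι] {i j : ι}

theorem linearIndependent_pair_single_single (hij : i ≠ j) :
    LinearIndependent R ![(Pi.single i 1 : ι → R), Pi.single j 1] :=
  LinearIndependent.pair_iff.2 fun s t h ↦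
    ⟨by simpa [hij] using congrFun h i, by simpa [hij.symm] using congrFun h j⟩

theorem linearIndependent_pair_single_one (hij : i ≠ j) :
    LinearIndependent R ![(Pi.single i 1 : ι → R), 1] :=
  LinearIndependent.pair_iff.2 fun s t h ↦ by
    have ht : t = 0 := by simpa [hij.symm] using congrFun h j
    exact ⟨by simpa [ht] using congrFun h i, ht⟩

end LinearIndependence

section FundamentalTheorem

open Matrix

variable {R ι : Type*} [CommRing R] [Fintype ι] [DecidableEq ι]

theorem exists_linearEquiv_span_frame (v : ι → ι → R) (d : ι → R) (hv : IsUnit (of v).det)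
    (hd : ∀ i, IsUnit (of (Function.update v i d)).det) :
    ∃ e : (ι → R) ≃ₗ[R] (ι → R),
      (∀ i, R ∙ e (Pi.single i 1) = R ∙ v i) ∧ R ∙ e 1 = R ∙ d := by
  set A := (of v)ᵀ
  have cramer_isUnit (i : ι) : IsUnit (A.cramer d i) := by
    rw [cramer_transpose_apply]
    exact hd i
  have hdet : IsUnit (A * diagonal (A.cramer d)).det := by
    rw [det_mul, det_transpose, det_diagonal]
    exact hv.mul (IsUnit.prod_univ_iff.2 cramer_isUnit)
  -- By Cramer's rule, scaling the `i`-th vector by `A.cramer d i` makes their sum `A.det • d`.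
  let e := (A * diagonal (A.cramer d)).toLinearEquiv' (invertibleOfIsUnitDet _ hdet)
  have he (w : ι → R) : e w = (A * diagonal (A.cramer d)) *ᵥ w := rfl
  refine ⟨e, fun i ↦ ?_, ?_⟩
  · have he_single : e (Pi.single i 1) = A.cramer d i • v i := by
      rw [he, mulVec_single_one]
      ext j
      exact (mul_diagonal _ _ _ _).trans (mul_comm _ _)
    rw [he_single, Submodule.span_singleton_smul_eq (cramer_isUnit i)]
  · have he_one : e 1 = A.det • d := by
      have hdiag : diagonal (A.cramer d) *ᵥ 1 = A.cramer d := by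
        ext i
        rw [mulVec_diagonal, Pi.one_apply, mul_one]
      rw [he, ← mulVec_mulVec, hdiag, mulVec_cramer]
    rw [he_one, Submodule.span_singleton_smul_eq (by rwa [det_transpose])]

end FundamentalTheorem

section Transport

theorem orderIsoMapComap_span_singleton {R M N : Type*} [Semiring R] [AddCommMonoid M]
    [AddCommMonoid N] [Module R M] [Module R N] (e : M ≃ₗ[R] N) (v : M) :
    Submodule.orderIsoMapComap e (R ∙ v) = R ∙ e v := by
  rw [Submodule.orderIsoMapComap_apply, Submodule.map_span, Set.image_singleton,
    LinearEquiv.coe_coe]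

theorem exists_isUnit_apply_of_map {R ι κ : Type*} [CommRing R] [IsLocalRing R] [Finite ι]
    (f : (ι → R) →ₗ[R] (κ → R)) {v : ι → R} (h : ∃ i, IsUnit (f v i)) : ∃ i, IsUnit (v i) := by
  classical
  cases nonempty_fintype ι
  obtain ⟨i, hi⟩ := h
  rw [f.pi_apply_eq_sum_univ v, Finset.sum_apply] at hi
  obtain ⟨j, -, hj⟩ := IsLocalRing.exists_of_isUnit_sum hi
  exact ⟨j, isUnit_of_mul_isUnit_left hj⟩

theorem exists_isUnit_apply_iff {R ι κ : Type*} [CommRing R] [IsLocalRing R] [Finite ι] [Finite κ]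
    (e : (ι → R) ≃ₗ[R] (κ → R)) {v : ι → R} : (∃ i, IsUnit (e v i)) ↔ ∃ i, IsUnit (v i) :=
  ⟨exists_isUnit_apply_of_map (e : (ι → R) →ₗ[R] (κ → R)), fun h ↦
    exists_isUnit_apply_of_map (e.symm : (κ → R) →ₗ[R] (ι → R)) (by simpa using h)⟩

variable {R : Type} [CommRing R] {n k : ℕ}

theorem isFreeRank_orderIsoMapComap_iff (e : (Fin n → R) ≃ₗ[R] (Fin n → R))
    {L : Submodule R (Fin n → R)} :
    IsFreeRank k (Submodule.orderIsoMapComap e L) ↔ IsFreeRank k L :=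
  ⟨fun ⟨f⟩ ↦ ⟨f.trans (e.submoduleMap L).symm⟩, fun ⟨f⟩ ↦ ⟨f.trans (e.submoduleMap L)⟩⟩

variable [IsLocalRing R]

theorem isPoint_orderIsoMapComap_iff (e : (Fin n → R) ≃ₗ[R] (Fin n → R))
    {P : Submodule R (Fin n → R)} : IsPoint (Submodule.orderIsoMapComap e P) ↔ IsPoint P := by
  rw [IsPoint, e.surjective.exists]
  simp only [exists_isUnit_apply_iff, ← orderIsoMapComap_span_singleton,
    EmbeddingLike.apply_eq_iff_eq, IsPoint]

theorem isHyperoval_image_iff (e : (Fin 3 → R) ≃ₗ[R] (Fin 3 → R))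
    {H : Set (Submodule R (Fin 3 → R))} :
    IsHyperoval (Submodule.orderIsoMapComap e '' H) ↔ IsHyperoval H := by
  have points_on_line (L : Submodule R (Fin 3 → R)) :
      {P ∈ Submodule.orderIsoMapComap e '' H | P ≤ Submodule.orderIsoMapComap e L} =
        Submodule.orderIsoMapComap e '' {P ∈ H | P ≤ L} := by
    ext P
    obtain ⟨P, rfl⟩ := (Submodule.orderIsoMapComap e).surjective P
    simp only [Set.mem_ofPred_eq, (Submodule.orderIsoMapComap e).injective.mem_set_image,
      OrderIso.le_iff_le]
  have ncard_image (T : Set (Submodule R (Fin 3 → R))) :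
      (Submodule.orderIsoMapComap e '' T).ncard = T.ncard :=
    Set.ncard_image_of_injective T (Submodule.orderIsoMapComap e).injective
  refine and_congr ?_ (and_congr (by rw [ncard_image]) ?_)
  · simp only [Set.forall_mem_image, isPoint_orderIsoMapComap_iff]
  · rw [(Submodule.orderIsoMapComap e).surjective.forall]
    simp only [isFreeRank_orderIsoMapComap_iff, points_on_line, ncard_image]

theorem existsUnique_isHyperoval_image_iff (e : (Fin 3 → R) ≃ₗ[R] (Fin 3 → R))
    {S : Set (Submodule R (Fin 3 → R))} :
    (∃! H, IsHyperoval H ∧ Submodule.orderIsoMapComap e '' S ⊆ H) ↔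
      ∃! H, IsHyperoval H ∧ S ⊆ H := by
  let E := (Submodule.orderIsoMapComap e).toEquiv
  refine ((Equiv.Set.congr E).existsUnique_congr fun H ↦ ?_).symm
  exact and_congr (isHyperoval_image_iff e).symm (Set.image_subset_image_iff E.injective).symm

end Transport

section Hyperovals

variable {R : Type} [CommRing R]

theorem span_singleton_injective_of_det_ne_zero {ι : Type*} [Fintype ι]
    (hι : 2 < Fintype.card ι) {v : ι → Fin 3 → R}
    (hdet : ∀ i j k, i ≠ j → i ≠ k → j ≠ k → (Matrix.of ![v i, v j, v k]).det ≠ 0) :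
    Function.Injective fun i ↦ R ∙ v i := by
  classical
  intro i j hij
  by_contra hne
  obtain ⟨k, -, hk⟩ := Finset.exists_mem_notMem_of_card_lt_card
    (Finset.card_le_two.trans_lt hι : ({i, j} : Finset ι).card < Finset.univ.card)
  simp only [Finset.mem_insert, Finset.mem_singleton, not_or] at hk
  obtain ⟨c, hc⟩ : ∃ c : R, c • v j = v i :=
    Submodule.mem_span_singleton.1 (hij.le (Submodule.mem_span_singleton_self (v i)))
  refine hdet i j k hne (Ne.symm hk.1) (Ne.symm hk.2) ?_
  rw [← hc, Matrix.det_fin_three]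
  simp only [Matrix.of_apply, Matrix.cons_val, Pi.smul_apply, smul_eq_mul]
  ring

theorem isHyperoval_range_span {v : Fin 7 → Fin 3 → R} (hv : ∀ i, ∃ j, IsUnit (v i j))
    (hdet : ∀ i j k, i ≠ j → i ≠ k → j ≠ k → (Matrix.of ![v i, v j, v k]).det ≠ 0) :
    IsHyperoval (Set.range fun i ↦ R ∙ v i) := by
  have hinj := span_singleton_injective_of_det_ne_zero (by simp) hdet
  refine ⟨Set.forall_mem_range.2 fun i ↦ ⟨v i, hv i, rfl⟩, ?_, fun L hL ↦ ?_⟩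
  · rw [Set.ncard_range_of_injective hinj, Nat.card_fin]
  · by_contra! hlt
    obtain ⟨_, _, _, ⟨⟨i, rfl⟩, hi⟩, ⟨⟨j, rfl⟩, hj⟩, ⟨⟨k, rfl⟩, hk⟩, hij, hik, hjk⟩ :=
      (Set.two_lt_ncard_iff ((Set.finite_range _).subset (Set.sep_subset _ _))).1 hlt
    simp only [Submodule.span_singleton_le_iff_mem] at hi hj hk
    exact hdet i j k (hinj.ne_iff.1 hij) (hinj.ne_iff.1 hik) (hinj.ne_iff.1 hjk)
      (hL.det_eq_zero (by simp) (by simp [Fin.forall_fin_succ, hi, hj, hk]))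

variable [Nontrivial R] {H : Set (Submodule R (Fin 3 → R))}

theorem IsHyperoval.span_eq_or_span_eq (hH : IsHyperoval H) {a b v : Fin 3 → R}
    (hab : LinearIndependent R ![a, b]) (ha : R ∙ a ∈ H) (hb : R ∙ b ∈ H) (hv : R ∙ v ∈ H)
    (hvab : v ∈ Submodule.span R {a, b}) : R ∙ v = R ∙ a ∨ R ∙ v = R ∙ b := by
  obtain ⟨-, hcard, hlines⟩ := hH
  by_contra! hne
  have hline : IsLine (Submodule.span R {a, b}) := by
    simpa [Set.pair_comm] using isFreeRank_span_range hab
  have hspan_ne : R ∙ a ≠ R ∙ b := by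
    intro hspan
    obtain ⟨c, hc⟩ : ∃ c : R, c • a = b :=
      Submodule.mem_span_singleton.1 (hspan.ge (Submodule.mem_span_singleton_self b))
    have hrel : c • a + (-1 : R) • b = 0 := by simp [hc]
    exact one_ne_zero (neg_eq_zero.1 (LinearIndependent.pair_iff.1 hab c (-1) hrel).2)
  have hfin : H.Finite := Set.finite_of_ncard_ne_zero (by simp [hcard])
  refine (hlines _ hline).not_gt ((Set.two_lt_ncard_iff (hfin.subset (Set.sep_subset _ _))).2
    ⟨R ∙ a, R ∙ b, R ∙ v, ⟨ha, ?_⟩, ⟨hb, ?_⟩, ⟨hv, ?_⟩, hspan_ne, hne.1.symm, hne.2.symm⟩)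
  · exact Submodule.span_mono (by simp)
  · exact Submodule.span_mono (by simp)
  · exact (Submodule.span_singleton_le_iff_mem _ _).2 hvab

end Hyperovals

section StandardFrame

/-- The standard frame of PHG(2, R): the points spanned by the unit vectors and by the all-ones
vector. -/
def stdFrame (R : Type) [CommRing R] : Set (Submodule R (Fin 3 → R)) :=
  insert (R ∙ 1) (Set.range fun i ↦ R ∙ Pi.single i 1)

variable {R : Type} [CommRing R]

theorem span_single_mem_stdFrame (i : Fin 3) : R ∙ Pi.single i 1 ∈ stdFrame R :=
  Set.mem_insert_of_mem _ ⟨i, rfl⟩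

theorem span_one_mem_stdFrame : R ∙ (1 : Fin 3 → R) ∈ stdFrame R :=
  Set.mem_insert _ _

theorem image_stdFrame (e : (Fin 3 → R) ≃ₗ[R] (Fin 3 → R)) :
    Submodule.orderIsoMapComap e '' stdFrame R =
      insert (R ∙ e 1) (Set.range fun i ↦ R ∙ e (Pi.single i 1)) := by
  simp only [stdFrame, Set.image_insert_eq, ← Set.range_comp, Function.comp_def,
    orderIsoMapComap_span_singleton]

theorem exists_linearEquiv_image_stdFrame_eq {a b c d : Fin 3 → R}
    (habc : IsUnit (Matrix.of ![a, b, c]).det) (hdbc : IsUnit (Matrix.of ![d, b, c]).det)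
    (hadc : IsUnit (Matrix.of ![a, d, c]).det) (habd : IsUnit (Matrix.of ![a, b, d]).det) :
    ∃ e : (Fin 3 → R) ≃ₗ[R] (Fin 3 → R),
      Submodule.orderIsoMapComap e '' stdFrame R = {R ∙ a, R ∙ b, R ∙ c, R ∙ d} := by
  have hupdate (i : Fin 3) :
      Function.update ![a, b, c] i d = ![![d, b, c], ![a, d, c], ![a, b, d]] i := by
    ext j : 1
    fin_cases i <;> fin_cases j <;> rfl
  obtain ⟨e, he_single, he_one⟩ := exists_linearEquiv_span_frame ![a, b, c] d habc fun i ↦ by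
    rw [hupdate]
    fin_cases i
    exacts [hdbc, hadc, habd]
  refine ⟨e, ?_⟩
  simp only [image_stdFrame, he_one, he_single]
  ext P
  simp only [Set.mem_insert_iff, Set.mem_singleton_iff, Set.mem_range, eq_comm (b := P),
    Fin.exists_fin_succ, Matrix.cons_val_zero, Matrix.cons_val_succ, IsEmpty.exists_iff]
  tauto

variable [Nontrivial R] {H : Set (Submodule R (Fin 3 → R))} {v : Fin 3 → R}

theorem IsHyperoval.apply_ne_zero_of_notMem_stdFrame (hH : IsHyperoval H) (hframe : stdFrame R ⊆ H)
    (hv : R ∙ v ∈ H) (hvframe : R ∙ v ∉ stdFrame R) (k : Fin 3) : v k ≠ 0 := by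
  intro hk
  have hli : LinearIndependent R ![(Pi.single (k + 1) 1 : Fin 3 → R), Pi.single (k + 2) 1] :=
    linearIndependent_pair_single_single (by simp)
  have hmem : v ∈ Submodule.span R {(Pi.single (k + 1) 1 : Fin 3 → R), Pi.single (k + 2) 1} := by
    refine Submodule.mem_span_pair.2 ⟨v (k + 1), v (k + 2), ?_⟩
    ext i
    fin_cases k <;> fin_cases i <;> simp_all
  rcases hH.span_eq_or_span_eq hli (hframe (span_single_mem_stdFrame _))
    (hframe (span_single_mem_stdFrame _)) hv hmem with h | h
  · exact hvframe (h ▸ span_single_mem_stdFrame _)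
  · exact hvframe (h ▸ span_single_mem_stdFrame _)

theorem IsHyperoval.apply_add_one_ne_of_notMem_stdFrame (hH : IsHyperoval H)
    (hframe : stdFrame R ⊆ H) (hv : R ∙ v ∈ H) (hvframe : R ∙ v ∉ stdFrame R) (k : Fin 3) :
    v (k + 1) ≠ v (k + 2) := by
  intro hk
  have hli : LinearIndependent R ![(Pi.single k 1 : Fin 3 → R), 1] :=
    linearIndependent_pair_single_one (j := k + 1) (by simp)
  have hmem : v ∈ Submodule.span R {(Pi.single k 1 : Fin 3 → R), 1} := by
    refine Submodule.mem_span_pair.2 ⟨v k - v (k + 1), v (k + 1), ?_⟩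
    ext i
    fin_cases k <;> fin_cases i <;> simp_all
  rcases hH.span_eq_or_span_eq hli (hframe (span_single_mem_stdFrame _))
    (hframe span_one_mem_stdFrame) hv hmem with h | h
  · exact hvframe (h ▸ span_single_mem_stdFrame _)
  · exact hvframe (h ▸ span_one_mem_stdFrame)

end StandardFrame

section IntegersModFour

instance isLocalHom_red2 : IsLocalHom red2 :=
  ⟨by decide⟩

instance isLocalRing_R4 : IsLocalRing R4 :=
  red2.domain_isLocalRing

/-- Representatives of the points of the hyperoval through the standard frame of PHG(2, ℤ/4ℤ):
the four frame vectors followed by the cyclic shifts of `(1, 2, 3)`. -/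
def stdHyperovalVec : Fin 7 → Fin 3 → R4 :=
  ![![1, 0, 0], ![0, 1, 0], ![0, 0, 1], ![1, 1, 1], ![1, 2, 3], ![2, 3, 1], ![3, 1, 2]]

theorem stdFrame_subset_range_stdHyperovalVec :
    stdFrame R4 ⊆ Set.range fun i ↦ R4 ∙ stdHyperovalVec i := by
  have hsingle (i : Fin 3) : ∃ j, stdHyperovalVec j = Pi.single i 1 := by
    decide +revert
  have hone : ∃ j, stdHyperovalVec j = 1 := by
    decide
  rintro _ (rfl | ⟨i, rfl⟩)
  · exact hone.imp fun j hj ↦ congrArg (R4 ∙ ·) hj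
  · exact (hsingle i).imp fun j hj ↦ congrArg (R4 ∙ ·) hj

theorem det_stdHyperovalVec_ne_zero {i j k : Fin 7} (hij : i ≠ j) (hik : i ≠ k) (hjk : j ≠ k) :
    (Matrix.of ![stdHyperovalVec i, stdHyperovalVec j, stdHyperovalVec k]).det ≠ 0 := by
  rw [Matrix.det_fin_three]
  decide +revert

theorem isHyperoval_range_stdHyperovalVec :
    IsHyperoval (Set.range fun i ↦ R4 ∙ stdHyperovalVec i) :=
  isHyperoval_range_span (by decide) fun _ _ _ ↦ det_stdHyperovalVec_ne_zero

theorem exists_eq_or_eq_neg_stdHyperovalVec {v : Fin 3 → R4} (hzero : ∀ k, v k ≠ 0)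
    (hdistinct : ∀ k, v (k + 1) ≠ v (k + 2)) :
    ∃ i, v = stdHyperovalVec i ∨ v = -stdHyperovalVec i := by
  decide +revert

theorem IsHyperoval.subset_range_stdHyperovalVec {H : Set (Submodule R4 (Fin 3 → R4))}
    (hH : IsHyperoval H) (hframe : stdFrame R4 ⊆ H) :
    H ⊆ Set.range fun i ↦ R4 ∙ stdHyperovalVec i := by
  intro P hP
  by_cases hPframe : P ∈ stdFrame R4
  · exact stdFrame_subset_range_stdHyperovalVec hPframe
  obtain ⟨v, -, rfl⟩ := hH.1 P hP
  obtain ⟨i, rfl | rfl⟩ := exists_eq_or_eq_neg_stdHyperovalVec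
    (hH.apply_ne_zero_of_notMem_stdFrame hframe hP hPframe)
    (hH.apply_add_one_ne_of_notMem_stdFrame hframe hP hPframe)
  · exact ⟨i, rfl⟩
  · exact ⟨i, by rw [← Set.neg_singleton, Submodule.span_neg]⟩

theorem existsUnique_isHyperoval_stdFrame : ∃! H, IsHyperoval H ∧ stdFrame R4 ⊆ H := by
  refine ⟨_, ⟨isHyperoval_range_stdHyperovalVec, stdFrame_subset_range_stdHyperovalVec⟩, ?_⟩
  rintro H ⟨hH, hframe⟩
  refine Set.eq_of_subset_of_ncard_le (hH.subset_range_stdHyperovalVec hframe) ?_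
  rw [isHyperoval_range_stdHyperovalVec.2.1, hH.2.1]

theorem isUnit_det_of_not_collinearF2 {a b c : Fin 3 → R4}
    (h : ¬ CollinearF2 (redPt (R4 ∙ a)) (redPt (R4 ∙ b)) (redPt (R4 ∙ c))) :
    IsUnit (Matrix.of ![a, b, c]).det := by
  have hspan : redPt (R4 ∙ a) ⊔ redPt (R4 ∙ b) ⊔ redPt (R4 ∙ c) =
      Submodule.span (ZMod 2) (Set.range ![redMap a, redMap b, redMap c]) := by
    simp only [redPt, Submodule.map_span, Set.image_singleton, Matrix.range_cons,
      Matrix.range_empty, Set.union_empty, Submodule.span_union, sup_assoc]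
  have hli : LinearIndependent (ZMod 2) ![redMap a, redMap b, redMap c] := by
    rw [CollinearF2, hspan, not_le] at h
    exact linearIndependent_iff_card_le_finrank_span.2 h
  have hmap : red2.mapMatrix (Matrix.of ![a, b, c]) =
      Matrix.of ![redMap a, redMap b, redMap c] := by
    ext i j
    fin_cases i <;> rfl
  refine isUnit_of_map_unit red2 _ ?_
  rw [RingHom.map_det, hmap, ← Matrix.isUnit_iff_isUnit_det]
  exact Matrix.linearIndependent_rows_iff_isUnit.1 hli

theorem IsQuadrangleSet.exists_eq_image_stdFrame {S : Set (Submodule R4 (Fin 3 → R4))}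
    (hS : IsQuadrangleSet S) :
    ∃ e : (Fin 3 → R4) ≃ₗ[R4] (Fin 3 → R4), S = Submodule.orderIsoMapComap e '' stdFrame R4 := by
  obtain ⟨hpoint, hcard, -, hncol⟩ := hS
  obtain ⟨A, B, C, D, hAB, hAC, hAD, hBC, hBD, hCD, rfl⟩ := Set.ncard_eq_four.1 hcard
  obtain ⟨a, -, rfl⟩ := hpoint A (by simp)
  obtain ⟨b, -, rfl⟩ := hpoint B (by simp)
  obtain ⟨c, -, rfl⟩ := hpoint C (by simp)
  obtain ⟨d, -, rfl⟩ := hpoint D (by simp)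
  have habc := isUnit_det_of_not_collinearF2
    (hncol _ (by simp) _ (by simp) _ (by simp) hAB hAC hBC)
  have hdbc := isUnit_det_of_not_collinearF2
    (hncol _ (by simp) _ (by simp) _ (by simp) hBD.symm hCD.symm hBC)
  have hadc := isUnit_det_of_not_collinearF2
    (hncol _ (by simp) _ (by simp) _ (by simp) hAD hAC hCD.symm)
  have habd := isUnit_det_of_not_collinearF2
    (hncol _ (by simp) _ (by simp) _ (by simp) hAB hAD hBD)
  obtain ⟨e, he⟩ := exists_linearEquiv_image_stdFrame_eq habc hdbc hadc habd
  exact ⟨e, he.symm⟩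

end IntegersModFour

/-- Every quadrangle of PHG(2, ℤ/4ℤ) is contained in a unique hyperoval. -/
theorem quadrangle_in_unique_hyperoval :
    ∀ S : Set (Submodule R4 (Fin 3 → R4)), IsQuadrangleSet S →
      ∃! H : Set (Submodule R4 (Fin 3 → R4)), IsHyperoval H ∧ S ⊆ H := by
  intro S hS
  obtain ⟨e, rfl⟩ := hS.exists_eq_image_stdFrame
  exact (existsUnique_isHyperoval_image_iff e).2 existsUnique_isHyperoval_stdFrame
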